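/- Let n, q, r be positive integers with n = qr + 1, and let A = {a_0, a_1, …, a_{n−1}}. For 0 ≤ i ≤ n−1 and 0 ≤ j ≤ r−1, let S_{ij} = {a_{(i+t) mod n} : jq+1 ≤ t ≤ (j+1)q}. Let G be a graph on vertex set A such that for every i there exists some j_i ∈ {0,…,r−1} with all neighbors of a_i in G contained in S_{i,j_i}. Then for any integer m ≤ r/2 and any m-element subset A' of A, there exists a cyclic ordering σ of A' that is a 1-vanishing order of the induced subgraph G[A'], i.e., there is a coloring φ : A' → {1,2} such that every edge {u,v} of G[A'] with σ(u) < σ(v) satisfies φ(u) = 1 and φ(v) = 2. -/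

import Mathlib

/-!
Think of `{0, …, n-1}` as points on a circle. Cutting the circle just before a point `c` and
reading `A'` from there gives a cyclic ordering. If all neighbours of `x` lie in an arc that
avoids `x`, and the cut does not fall strictly inside that arc, then all neighbours of `x` lie on
the same side of `x`. An arc of `q` points has only `q - 1` interior cuts, so the `m ≤ r` vertices
of `A'` rule out at most `m (q - 1) < q r + 1 = n` cuts (`exists_good_cut`), and some cut is good
for every vertex. In the resulting order no vertex has both an earlier and a later neighbour
(`cut_mem_arc`), so colouring a vertex `1` when it has a later neighbour and `2` otherwise works.
-/

open Finset Filter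

variable {α : Type*} {β : Type*}

/-- `(V, E)` is a `k`-uniform hypergraph: every edge is a `k`-element subset of `V`. -/
def IsKGraph [DecidableEq α] (k : ℕ) (V : Finset α) (E : Finset (Finset α)) : Prop :=
  ∀ e ∈ E, e ⊆ V ∧ e.card = k

/-- The degree of a vertex set `S`: the number of edges containing `S`. -/
def degS [DecidableEq α] (E : Finset (Finset α)) (S : Finset α) : ℕ :=
  (E.filter fun e => S ⊆ e).card

/-- The minimum `ℓ`-degree of a hypergraph: the minimum of `degS` over `ℓ`-subsets of `V`. -/
noncomputable def minDeg [DecidableEq α] (ℓ : ℕ) (V : Finset α) (E : Finset (Finset α)) : ℕ :=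
  sInf {d | ∃ S ⊆ V, S.card = ℓ ∧ d = degS E S}

/-- The edge set of the link of `S`: `{e \ S : S ⊆ e ∈ E}`. -/
def linkE [DecidableEq α] (E : Finset (Finset α)) (S : Finset α) : Finset (Finset α) :=
  (E.filter fun e => S ⊆ e).image fun e => e \ S

/-- The rank (1-based position) of `x` within `T` with respect to `σ`. -/
def rankIn (T : Finset α) (σ : α → ℕ) (x : α) : ℕ :=
  (T.filter fun y => σ y ≤ σ x).card

/-- `σ` is an ordering of `V`, i.e. a bijection `V → {1, …, |V|}`. -/
def IsOrdering (V : Finset α) (σ : α → ℕ) : Prop :=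
  Set.BijOn σ ↑V (Set.Icc 1 V.card)

/-- `σ` is an `ℓ`-vanishing order of the `k`-graph `(V, E)`: it is an ordering of `V` and there
is a coloring `φ` of `ℓ`-sets of vertices such that for every edge `e` and every `ℓ`-subset `X`
of `e`, `φ X` equals the set of positions that `X` occupies inside `e` under `σ`. -/
def IsVanishingOrder [DecidableEq α] (ℓ : ℕ) (V : Finset α) (E : Finset (Finset α))
    (σ : α → ℕ) : Prop :=
  IsOrdering V σ ∧
    ∃ φ : Finset α → Finset ℕ,
      ∀ e ∈ E, ∀ X ⊆ e, X.card = ℓ → φ X = X.image (rankIn e σ)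

/-- The hypergraph `(VH, EH)` contains a copy of `(VF, EF)`. -/
def ContainsCopy [DecidableEq α] [DecidableEq β] (VF : Finset α) (EF : Finset (Finset α))
    (VH : Finset β) (EH : Finset (Finset β)) : Prop :=
  ∃ f : α → β, Set.InjOn f ↑VF ∧ (∀ v ∈ VF, f v ∈ VH) ∧ ∀ e ∈ EF, e.image f ∈ EH

/-- `ex_ℓ(n, F)`: the maximum of `δ_ℓ(H)` over all `F`-free `k`-graphs `H` on `n` vertices. -/
noncomputable def exDeg [DecidableEq α] (k ℓ n : ℕ) (VF : Finset α)
    (EF : Finset (Finset α)) : ℕ :=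
  sSup {d | ∃ E : Finset (Finset (Fin n)), (∀ e ∈ E, e.card = k) ∧
    ¬ ContainsCopy VF EF (Finset.univ : Finset (Fin n)) E ∧ d = minDeg ℓ Finset.univ E}

/-- The `ℓ`-degree Turán density of the `k`-graph `F = (VF, EF)` equals `x`, i.e.
`ex_ℓ(n, F) / C(n-ℓ, k-ℓ) → x` as `n → ∞` (this limit is known to exist). -/
def HasTuranDensity [DecidableEq α] (k ℓ : ℕ) (VF : Finset α) (EF : Finset (Finset α))
    (x : ℝ) : Prop :=
  Tendsto (fun n : ℕ => (exDeg k ℓ n VF EF : ℝ) / ((n - ℓ).choose (k - ℓ) : ℝ)) atTop (nhds x)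

/-- The `t`-uniform hypergraph `(V, E)` is `t`-partite: the vertices can be split into `t`
parts so that every edge contains exactly one vertex from each part. -/
def IsPartite (t : ℕ) (V : Finset α) (E : Finset (Finset α)) : Prop :=
  ∃ P : α → Fin t, ∀ e ∈ E, ∀ i : Fin t, (e.filter fun v => P v = i).card = 1

/-- The arc `S_{ij}` (on the vertex set `{0, …, n-1}`, identifying `a_i` with `i`):
`S_{ij} = {(i + t) % n : jq + 1 ≤ t ≤ (j+1)q}`. -/
def arcSet (n q i j : ℕ) : Finset ℕ :=
  (Finset.Icc (j * q + 1) ((j + 1) * q)).image fun t => (i + t) % n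

/-- `σ` is a cyclic ordering of `A' = {a_{i_1} < ⋯ < a_{i_m}}`: for some shift, the `σ`-values
are obtained by cyclically rotating the positions in the increasing order of `A'`. -/
def IsCyclicOrdering (A' : Finset ℕ) (σ : ℕ → ℕ) : Prop :=
  ∃ s : ℕ, ∀ x ∈ A', σ x = (rankIn A' id x + s) % A'.card + 1

/-- `u` comes before `v` when the cycle `0, 1, …, n-1` is read starting from `c`. -/
def CutBefore (c u v : ℕ) : Prop :=
  (c ≤ u ∧ v < c) ∨ (u < v ∧ (c ≤ u ∨ v < c))

lemma add_mod_cases {n x t : ℕ} (hx : x < n) (ht : t < n) :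
    (x + t < n ∧ (x + t) % n = x + t) ∨ (n ≤ x + t ∧ (x + t) % n = x + t - n) := by
  rcases lt_or_ge (x + t) n with h | h
  · exact Or.inl ⟨h, Nat.mod_eq_of_lt h⟩
  · refine Or.inr ⟨h, ?_⟩
    rw [Nat.mod_eq_sub_mod h, Nat.mod_eq_of_lt (by omega)]

/-- If the arc `v + [a + 1, b]`, which avoids `v`, contains points on both sides of `v` in the
order starting at `c`, then the cut at `c` is strictly inside the arc. -/
lemma cut_mem_arc {n a b v t₁ t₂ c : ℕ} (hb : b < n) (hv : v < n) (hc : c < n)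
    (h₁ : t₁ ∈ Icc (a + 1) b) (h₂ : t₂ ∈ Icc (a + 1) b)
    (hu : CutBefore c ((v + t₁) % n) v) (hw : CutBefore c v ((v + t₂) % n)) :
    c ∈ (Icc (a + 2) b).image fun t => (v + t) % n := by
  rw [mem_Icc] at h₁ h₂
  have e₁ := add_mod_cases hv (show t₁ < n by omega)
  have e₂ := add_mod_cases hv (show t₂ < n by omega)
  unfold CutBefore at hu hw
  rw [mem_image]
  rcases le_or_gt v c with h | h
  · refine ⟨c - v, ?_, ?_⟩
    · rw [mem_Icc]; omega
    · rw [Nat.add_sub_cancel' h, Nat.mod_eq_of_lt hc]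
  · refine ⟨c + n - v, ?_, ?_⟩
    · rw [mem_Icc]; omega
    · have e := add_mod_cases hv (show c + n - v < n by omega)
      show (v + (c + n - v)) % n = c
      omega

/-- Some cut `c` is not strictly inside the arc number `j x` of any vertex `x ∈ A`. -/
lemma exists_good_cut (n q r : ℕ) (hn : n = q * r + 1) (A : Finset ℕ) (hA : A.card ≤ r)
    (j : ℕ → ℕ) :
    ∃ c < n, ∀ x ∈ A, c ∉ (Icc (j x * q + 2) ((j x + 1) * q)).image fun t => (x + t) % n := by
  by_contra! H
  have hsub : range n ⊆
      A.biUnion fun x => (Icc (j x * q + 2) ((j x + 1) * q)).image fun t => (x + t) % n := by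
    intro c hc
    rw [mem_biUnion]
    exact H c (mem_range.1 hc)
  have h₁ := card_le_card hsub
  have h₂ : _ ≤ A.card * (q - 1) :=
    card_biUnion_le_card_mul A
      (fun x => (Icc (j x * q + 2) ((j x + 1) * q)).image fun t => (x + t) % n) (q - 1)
      (fun x _ => card_image_le.trans (by rw [Nat.card_Icc, add_mul]; omega))
  rw [card_range] at h₁
  have h₃ : A.card * (q - 1) ≤ r * q := Nat.mul_le_mul hA (Nat.sub_le _ _)
  rw [mul_comm r q] at h₃
  omega

lemma rankIn_id_mono (A : Finset ℕ) {u v : ℕ} (h : u ≤ v) : rankIn A id u ≤ rankIn A id v :=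
  card_le_card fun y hy => by
    rw [mem_filter] at hy ⊢
    exact ⟨hy.1, le_trans hy.2 h⟩

/-- Rotating the ranks so that the first element `≥ c` (or the least element of `A`, if there is
none) gets value `1` yields the order starting at `c`. The summand `2 * A.card` keeps the
truncated subtraction exact; only the shift modulo `A.card` matters. -/
lemma cutBefore_of_rot_lt {A : Finset ℕ} {c u v : ℕ} (hu : u ∈ A) (hv : v ∈ A)
    (h : (rankIn A id u + (2 * A.card - 1 - (A.filter (· < c)).card)) % A.card + 1 <
      (rankIn A id v + (2 * A.card - 1 - (A.filter (· < c)).card)) % A.card + 1) :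
    CutBefore c u v := by
  set k := (A.filter (· < c)).card with hk
  have hkm : k ≤ A.card := card_le_card (filter_subset _ _)
  have hm : 0 < A.card := card_pos.2 ⟨u, hu⟩
  have key : ∀ x ∈ A,
      (x < c ∧ (rankIn A id x + (2 * A.card - 1 - k)) % A.card =
        rankIn A id x + A.card - 1 - k ∧ 1 ≤ rankIn A id x ∧ rankIn A id x ≤ k) ∨
      (c ≤ x ∧ (rankIn A id x + (2 * A.card - 1 - k)) % A.card =
        rankIn A id x - 1 - k ∧ k < rankIn A id x ∧ rankIn A id x ≤ A.card) := by
    intro x hx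
    have hr₁ : 1 ≤ rankIn A id x :=
      card_pos.2 ⟨x, mem_filter.2 ⟨hx, le_rfl⟩⟩
    have hr₂ : rankIn A id x ≤ A.card := card_le_card (filter_subset _ _)
    rcases lt_or_ge x c with h | h
    · have hrk : rankIn A id x ≤ k := card_le_card fun y hy => by
        rw [mem_filter] at hy ⊢
        exact ⟨hy.1, lt_of_le_of_lt hy.2 h⟩
      refine Or.inl ⟨h, ?_, hr₁, hrk⟩
      rw [show rankIn A id x + (2 * A.card - 1 - k) =
        (rankIn A id x + A.card - 1 - k) + A.card by omega, Nat.add_mod_right,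
        Nat.mod_eq_of_lt (by omega)]
    · have hrk : k < rankIn A id x := card_lt_card <| by
        refine (ssubset_iff_of_subset fun y hy => ?_).2
          ⟨x, mem_filter.2 ⟨hx, le_rfl⟩, fun hx' => ?_⟩
        · rw [mem_filter] at hy ⊢
          exact ⟨hy.1, hy.2.le.trans h⟩
        · exact absurd (mem_filter.1 hx').2 (not_lt.2 h)
      refine Or.inr ⟨h, ?_, hrk, hr₂⟩
      rw [show rankIn A id x + (2 * A.card - 1 - k) =
        (rankIn A id x - 1 - k) + A.card + A.card by omega, Nat.add_mod_right,
        Nat.add_mod_right, Nat.mod_eq_of_lt (by omega)]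
  have huv : rankIn A id u < rankIn A id v → u < v := fun h' => by
    by_contra! h''
    exact absurd (rankIn_id_mono A h'') (not_le.2 h')
  have ku := key u hu
  have kv := key v hv
  unfold CutBefore
  omega

/-- Let `n = qr + 1` and let `G` be a graph on `{0, …, n-1}` such that for every
vertex `i` all neighbours of `i` lie in a single arc `S_{i, j_i}`.  Then for every `m ≤ r/2` and
every `m`-subset `A'`, some cyclic ordering of `A'` is a `1`-vanishing order of `G[A']`. -/
theorem stmt_12 (n q r m : ℕ) (hq : 1 ≤ q) (hr : 1 ≤ r) (hn : n = q * r + 1)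
    (G : Finset (Finset ℕ)) (hG : ∀ e ∈ G, e ⊆ range n ∧ e.card = 2)
    (harc : ∀ i ∈ range n, ∃ j < r, ∀ v ∈ range n,
      ({i, v} : Finset ℕ) ∈ G → v ∈ arcSet n q i j)
    (hm : 2 * m ≤ r) (A' : Finset ℕ) (hA' : A' ⊆ range n) (hcard : A'.card = m) :
    ∃ σ : ℕ → ℕ, IsCyclicOrdering A' σ ∧
      ∃ φ : ℕ → ℕ, (∀ x ∈ A', φ x = 1 ∨ φ x = 2) ∧
        ∀ e ∈ G, e ⊆ A' → ∀ u ∈ e, ∀ v ∈ e, σ u < σ v → φ u = 1 ∧ φ v = 2 := by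
  classical
  have harc' : ∀ i, ∃ j, i ∈ range n → j < r ∧ ∀ v ∈ range n,
      ({i, v} : Finset ℕ) ∈ G → v ∈ arcSet n q i j := fun i => by
    by_cases hi : i ∈ range n
    · obtain ⟨j, hj⟩ := harc i hi
      exact ⟨j, fun _ => hj⟩
    · exact ⟨0, fun h => absurd h hi⟩
  choose j hj using harc'
  obtain ⟨c, hc, hgood⟩ := exists_good_cut n q r hn A' (by omega) j
  let σ : ℕ → ℕ := fun x =>
    (rankIn A' id x + (2 * A'.card - 1 - (A'.filter (· < c)).card)) % A'.card + 1
  refine ⟨σ, ⟨_, fun x _ => rfl⟩,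
    fun x => if ∃ w ∈ A', ({x, w} : Finset ℕ) ∈ G ∧ σ x < σ w then 1 else 2, ?_, ?_⟩
  · intro x _
    dsimp only
    split_ifs <;> simp
  · intro e he heA u hu v hv huv
    have hne : u ≠ v := fun h => by simp [h] at huv
    have heq : ({u, v} : Finset ℕ) = e := by
      refine eq_of_subset_of_card_le ?_ ?_
      · intro x hx
        rw [mem_insert, mem_singleton] at hx
        rcases hx with rfl | rfl <;> assumption
      · rw [(hG e he).2, card_pair hne]
    have huA := heA hu
    have hvA := heA hv
    refine ⟨if_pos ⟨v, hvA, heq ▸ he, huv⟩, if_neg ?_⟩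
    rintro ⟨w, hwA, hvw, hlt⟩
    obtain ⟨hjr, hnb⟩ := hj v (hA' hvA)
    have hu' := hnb u (hA' huA) (by rw [pair_comm, heq]; exact he)
    have hw' := hnb w (hA' hwA) hvw
    unfold arcSet at hu' hw'
    obtain ⟨t₁, ht₁, rfl⟩ := mem_image.1 hu'
    obtain ⟨t₂, ht₂, rfl⟩ := mem_image.1 hw'
    have hb : (j v + 1) * q < n := by
      have := Nat.mul_le_mul_right q (Nat.succ_le_of_lt hjr)
      rw [mul_comm r q] at this
      exact hn ▸ Nat.lt_succ_of_le this
    exact hgood v hvA (cut_mem_arc hb (mem_range.1 (hA' hvA)) hc ht₁ ht₂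
      (cutBefore_of_rot_lt huA hvA huv) (cutBefore_of_rot_lt hvA hwA hlt))
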